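/- Let A and B be n×n complex positive semidefinite matrices. Then for every j = 1, …, n, λ_j(A + B) ≥ 2 λ_j(B^{1/4} A^{1/2} B^{1/4}); equivalently (since B^{1/4} A^{1/2} B^{1/4} is positive semidefinite with the same eigenvalues as A^{1/2}B^{1/2}), λ_j(A + B) ≥ 2 λ_j(A^{1/2} B^{1/2}). -/

import Mathlib

/-!
Put `P = A^{1/4}` and `Q = B^{1/4}`, so that `B^{1/4} A^{1/2} B^{1/4} = (PQ)ᴴ(PQ)` has `j`-th
eigenvalue `σ_j(PQ)²`. The arithmetic–geometric mean inequality of Bhatia and Kittaneh gives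
`2 σ_j(PQ) ≤ λ_j(P² + Q²)`, and `(P² + Q²)² ≤ 2 (P⁴ + Q⁴) = 2 (A + B)` gives
`λ_j(P² + Q²)² ≤ 2 λ_j(A + B)`; together `4 σ_j(PQ)² ≤ 2 λ_j(A + B)`.

For the mean inequality `2 σ_j(A Bᴴ) ≤ λ_j(Aᴴ A + Bᴴ B)` let `s = σ_j(A Bᴴ) > 0` and let `V` be a
`j`-dimensional space on which `s ‖v‖ ≤ ‖A Bᴴ v‖`. By the max-min principle it suffices that
`2 s ‖w‖² ≤ ‖A w‖² + ‖B w‖²` for all `w = Aᴴ A Bᴴ v + s Bᴴ v` with `v ∈ V`, and that `v ↦ w` is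
injective on `V`.
-/

open Matrix
open scoped Classical ComplexOrder

/-- `eigDesc A j` is the `j`-th largest eigenvalue (1-based) of the Hermitian matrix `A`. -/
noncomputable def eigDesc {m : Type*} [Fintype m] [DecidableEq m] (A : Matrix m m ℂ) (j : ℕ) : ℝ :=
  if h : A.IsHermitian then
    ((Finset.univ.val.map h.eigenvalues).sort (· ≤ ·)).getD (Fintype.card m - j) 0
  else 0

/-- `singDesc M j` is the `j`-th largest singular value (1-based) of `M`, i.e. the square root
of the `j`-th largest eigenvalue of `Mᴴ * M`. -/
noncomputable def singDesc {m : Type*} [Fintype m] [DecidableEq m] (M : Matrix m m ℂ) (j : ℕ) : ℝ :=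
  Real.sqrt (eigDesc (Mᴴ * M) j)

/-- `matPow A s` is the power `A ^ s` of a positive semidefinite matrix `A`, defined via the
spectral decomposition of `A` (junk value `0` if `A` is not positive semidefinite). -/
noncomputable def matPow {m : Type*} [Fintype m] [DecidableEq m] (A : Matrix m m ℂ) (s : ℝ) :
    Matrix m m ℂ :=
  if h : A.PosSemidef then
    (h.1.eigenvectorUnitary : Matrix m m ℂ) *
      Matrix.diagonal (fun i => ((h.1.eigenvalues i ^ s : ℝ) : ℂ)) *
      (h.1.eigenvectorUnitary : Matrix m m ℂ)ᴴ
  else 0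

open ContinuousLinearMap Finset Module RCLike Submodule
open scoped InnerProductSpace

section CourantFischer

variable {𝕜 E : Type*} [RCLike 𝕜] [NormedAddCommGroup E] [InnerProductSpace 𝕜 E]

lemma finrank_span_image_of_orthonormal {ι : Type*} {b : ι → E} (hb : Orthonormal 𝕜 b)
    (s : Finset ι) : finrank 𝕜 (span 𝕜 (b '' s)) = #s := by
  have hli : LinearIndependent 𝕜 fun k : s ↦ b k :=
    hb.linearIndependent.comp _ Subtype.val_injective
  rw [Set.image_eq_range]
  exact (finrank_span_eq_card hli).trans (Fintype.card_coe s)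

lemma inner_eq_zero_of_mem_span_image {ι : Type*} {b : ι → E} (hb : Orthonormal 𝕜 b)
    {s : Set ι} {k : ι} (hk : k ∉ s) {x : E} (hx : x ∈ span 𝕜 (b '' s)) : ⟪b k, x⟫_𝕜 = 0 := by
  obtain ⟨l, hl, rfl⟩ := (Finsupp.mem_span_image_iff_linearCombination 𝕜).mp hx
  exact inner_eq_zero_symm.mp (hb.inner_finsupp_eq_zero hk hl)

variable [FiniteDimensional 𝕜 E] {T : E →ₗ[𝕜] E} (hT : T.IsSymmetric) {n : ℕ}
  (hn : finrank 𝕜 E = n)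

lemma re_inner_map_self_eq_sum_eigenvalues (x : E) :
    re ⟪T x, x⟫_𝕜 = ∑ k, hT.eigenvalues hn k * ‖⟪hT.eigenvectorBasis hn k, x⟫_𝕜‖ ^ 2 := by
  rw [← (hT.eigenvectorBasis hn).sum_inner_mul_inner, map_sum]
  refine sum_congr rfl fun k _ ↦ ?_
  rw [hT, hT.apply_eigenvectorBasis, inner_smul_right, mul_assoc, re_ofReal_mul,
    inner_mul_symm_re_eq_norm, norm_mul, norm_inner_symm, sq]

lemma re_inner_map_self_sub_eq_sum_of_mem_span {s : Finset (Fin n)} {x : E}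
    (hx : x ∈ span 𝕜 (hT.eigenvectorBasis hn '' s)) (t : ℝ) :
    re ⟪T x, x⟫_𝕜 - t * ‖x‖ ^ 2 =
      ∑ k ∈ s, (hT.eigenvalues hn k - t) * ‖⟪hT.eigenvectorBasis hn k, x⟫_𝕜‖ ^ 2 := by
  rw [re_inner_map_self_eq_sum_eigenvalues hT hn,
    ← (hT.eigenvectorBasis hn).sum_sq_norm_inner_right, mul_sum, ← sum_sub_distrib]
  simp_rw [← sub_mul]
  refine (sum_subset (subset_univ s) fun k _ hk ↦ ?_).symm
  have hinner : ⟪hT.eigenvectorBasis hn k, x⟫_𝕜 = 0 :=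
    inner_eq_zero_of_mem_span_image (hT.eigenvectorBasis hn).orthonormal (mem_coe.not.mpr hk) hx
  simp [hinner]

/-- The Courant–Fischer max-min principle. -/
theorem le_eigenvalues_iff_exists_submodule (i : Fin n) (t : ℝ) :
    t ≤ hT.eigenvalues hn i ↔
      ∃ V : Submodule 𝕜 E, finrank 𝕜 V = i + 1 ∧ ∀ x ∈ V, t * ‖x‖ ^ 2 ≤ re ⟪T x, x⟫_𝕜 := by
  set b := hT.eigenvectorBasis hn
  have hanti := hT.eigenvalues_antitone hn
  constructor
  · intro ht
    refine ⟨span 𝕜 (b '' Iic i), ?_, fun x hx ↦ ?_⟩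
    · rw [finrank_span_image_of_orthonormal b.orthonormal, Fin.card_Iic]
    · rw [← sub_nonneg, re_inner_map_self_sub_eq_sum_of_mem_span hT hn hx]
      exact sum_nonneg fun k hk ↦ mul_nonneg
        (sub_nonneg.mpr (ht.trans (hanti (mem_Iic.mp hk)))) (sq_nonneg _)
  · rintro ⟨V, hV, hVt⟩
    set U := span 𝕜 (b '' Ici i)
    have hU : finrank 𝕜 U = n - i := by
      rw [finrank_span_image_of_orthonormal b.orthonormal, Fin.card_Ici]
    have hVU : V ⊓ U ≠ ⊥ := fun h ↦ by
      have := finrank_add_finrank_le_of_disjoint (disjoint_iff.mpr h)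
      omega
    obtain ⟨x, ⟨hxV, hxU⟩, hx0⟩ := exists_mem_ne_zero_of_ne_bot hVU
    have hupper : re ⟪T x, x⟫_𝕜 ≤ hT.eigenvalues hn i * ‖x‖ ^ 2 := by
      rw [← sub_nonpos, re_inner_map_self_sub_eq_sum_of_mem_span hT hn hxU]
      exact sum_nonpos fun k hk ↦ mul_nonpos_of_nonpos_of_nonneg
        (sub_nonpos.mpr (hanti (mem_Ici.mp hk))) (sq_nonneg _)
    exact le_of_mul_le_mul_right ((hVt x hxV).trans hupper) (by positivity)

end CourantFischer

section ArithmeticGeometricMean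

variable {𝕜 E F G : Type*} [RCLike 𝕜] [NormedAddCommGroup E] [InnerProductSpace 𝕜 E]

lemma four_mul_re_inner_le_norm_add_sq (x y : E) : 4 * re ⟪x, y⟫_𝕜 ≤ ‖x + y‖ ^ 2 := by
  have := re_inner_eq_norm_add_mul_self_sub_norm_sub_mul_self_div_four (𝕜 := 𝕜) x y
  nlinarith [mul_self_nonneg ‖x - y‖]

variable [CompleteSpace E]
  [NormedAddCommGroup F] [InnerProductSpace 𝕜 F] [CompleteSpace F]
  [NormedAddCommGroup G] [InnerProductSpace 𝕜 G] [CompleteSpace G]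

variable (A : E →L[𝕜] F) (B : E →L[𝕜] G) {s : ℝ}

lemma four_mul_norm_sq_le_norm_adjoint_add_sq (v : G) :
    4 * s * ‖A (adjoint B v)‖ ^ 2 ≤
      ‖adjoint A (A (adjoint B v)) + (s : 𝕜) • adjoint B v‖ ^ 2 := by
  have hcross : re ⟪adjoint A (A (adjoint B v)), (s : 𝕜) • adjoint B v⟫_𝕜 =
      s * ‖A (adjoint B v)‖ ^ 2 := by
    rw [inner_smul_right, re_ofReal_mul, adjoint_inner_left, inner_self_eq_norm_sq]
  rw [mul_assoc, ← hcross]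
  exact four_mul_re_inner_le_norm_add_sq _ _

lemma eq_zero_of_adjoint_add_eq_zero (hs : 0 < s) (v : G) (hv : s * ‖v‖ ≤ ‖A (adjoint B v)‖)
    (hw : adjoint A (A (adjoint B v)) + (s : 𝕜) • adjoint B v = 0) : v = 0 := by
  have hle : 4 * s * ‖A (adjoint B v)‖ ^ 2 ≤ 0 := by
    simpa [hw] using four_mul_norm_sq_le_norm_adjoint_add_sq A B (s := s) v
  have hsq : ‖A (adjoint B v)‖ ^ 2 ≤ 0 := nonpos_of_mul_nonpos_right hle (by positivity)
  rw [pow_eq_zero_iff two_ne_zero |>.mp (hsq.antisymm (sq_nonneg _))] at hv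
  exact norm_le_zero_iff.mp (nonpos_of_mul_nonpos_right hv hs)

lemma norm_adjoint_add_sq_le (hs : 0 ≤ s) (a : F) (v : G) {w : E}
    (hw : w = adjoint A a + (s : 𝕜) • adjoint B v) :
    ‖w‖ ^ 2 ≤ ‖A w‖ * ‖a‖ + s * (‖B w‖ * ‖v‖) := by
  calc ‖w‖ ^ 2 = re ⟪w, adjoint A a + (s : 𝕜) • adjoint B v⟫_𝕜 := by
        rw [← hw, inner_self_eq_norm_sq]
    _ = re ⟪A w, a⟫_𝕜 + s * re ⟪B w, v⟫_𝕜 := by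
        rw [inner_add_right, inner_smul_right, map_add, re_ofReal_mul, adjoint_inner_right,
          adjoint_inner_right]
    _ ≤ ‖A w‖ * ‖a‖ + s * (‖B w‖ * ‖v‖) := by gcongr <;> exact re_inner_le_norm _ _

lemma two_mul_norm_adjoint_add_sq_le (hs : 0 ≤ s) (v : G) (hv : s * ‖v‖ ≤ ‖A (adjoint B v)‖)
    {w : E} (hw : w = adjoint A (A (adjoint B v)) + (s : 𝕜) • adjoint B v) :
    2 * s * ‖w‖ ^ 2 ≤ ‖A w‖ ^ 2 + ‖B w‖ ^ 2 := by
  set a := A (adjoint B v)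
  have hlower : 4 * s * ‖a‖ ^ 2 ≤ ‖w‖ ^ 2 :=
    hw ▸ four_mul_norm_sq_le_norm_adjoint_add_sq A B v
  have hupper : ‖w‖ ^ 2 ≤ ‖A w‖ * ‖a‖ + s * (‖B w‖ * ‖v‖) :=
    norm_adjoint_add_sq_le A B hs a v hw
  have hsv : (s * ‖v‖) ^ 2 ≤ ‖a‖ ^ 2 := by gcongr
  have hamgm : 4 * s * ‖w‖ ^ 2 ≤ ‖A w‖ ^ 2 + ‖B w‖ ^ 2 + 2 * s * ‖w‖ ^ 2 := by
    calc 4 * s * ‖w‖ ^ 2 ≤ 4 * s * (‖A w‖ * ‖a‖ + s * (‖B w‖ * ‖v‖)) := by gcongr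
      _ ≤ ‖A w‖ ^ 2 + ‖B w‖ ^ 2 + 4 * s ^ 2 * (‖a‖ ^ 2 + (s * ‖v‖) ^ 2) := by
        linarith [sq_nonneg (‖A w‖ - 2 * s * ‖a‖), sq_nonneg (‖B w‖ - 2 * s * (s * ‖v‖))]
      _ ≤ ‖A w‖ ^ 2 + ‖B w‖ ^ 2 + 4 * s ^ 2 * (‖a‖ ^ 2 + ‖a‖ ^ 2) := by gcongr
      _ = ‖A w‖ ^ 2 + ‖B w‖ ^ 2 + 2 * s * (4 * s * ‖a‖ ^ 2) := by ring
      _ ≤ ‖A w‖ ^ 2 + ‖B w‖ ^ 2 + 2 * s * ‖w‖ ^ 2 := by gcongr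
  linarith

end ArithmeticGeometricMean

section MatrixEigenvalues

variable {m : Type*} [Fintype m] [DecidableEq m]

lemma eigDesc_add_one {H : Matrix m m ℂ} (hH : H.IsHermitian) (i : Fin (Fintype.card m)) :
    eigDesc H (i + 1) = hH.eigenvalues₀ i := by
  have hperm : univ.val.map hH.eigenvalues = (List.ofFn hH.eigenvalues₀ : Multiset ℝ) := by
    rw [← Fin.univ_val_map, ← Multiset.map_univ_val_equiv
      (Fintype.equivOfCardEq (Fintype.card_fin (Fintype.card m))).symm, Multiset.map_map]
    rfl
  have hsort : (univ.val.map hH.eigenvalues).sort (· ≤ ·) =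
      (List.ofFn hH.eigenvalues₀).reverse := by
    refine List.Perm.eq_reverse_of_sortedLE_of_sortedGE ?_ (Multiset.pairwise_sort _ _).sortedLE
      hH.eigenvalues₀_antitone.sortedGE_ofFn
    rw [← Multiset.coe_eq_coe, Multiset.sort_eq, hperm]
  have hi := i.isLt
  rw [eigDesc, dif_pos hH, hsort, List.getD_eq_getElem _ _ (by simp; omega), List.getElem_reverse,
    List.getElem_ofFn]
  congr 1
  ext
  simp only [List.length_ofFn]
  omega

variable {j : ℕ}

lemma le_eigDesc_iff {H : Matrix m m ℂ} (hH : H.IsHermitian) (hj : 1 ≤ j)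
    (hjm : j ≤ Fintype.card m) {t : ℝ} :
    t ≤ eigDesc H j ↔ ∃ V : Submodule ℂ (EuclideanSpace ℂ m), finrank ℂ V = j ∧
      ∀ x ∈ V, t * ‖x‖ ^ 2 ≤ re ⟪toEuclideanCLM (𝕜 := ℂ) H x, x⟫_ℂ := by
  obtain ⟨i, rfl⟩ := Nat.exists_eq_add_of_le' hj
  rw [eigDesc_add_one hH ⟨i, hjm⟩]
  exact le_eigenvalues_iff_exists_submodule _ _ _ _

lemma eigDesc_nonneg {H : Matrix m m ℂ} (hH : H.PosSemidef) (hj : 1 ≤ j)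
    (hjm : j ≤ Fintype.card m) : 0 ≤ eigDesc H j := by
  obtain ⟨V, hV, -⟩ := (le_eigDesc_iff hH.isHermitian hj hjm).mp le_rfl
  refine (le_eigDesc_iff hH.isHermitian hj hjm).mpr ⟨V, hV, fun x _ ↦ ?_⟩
  rw [zero_mul]
  exact (isPositive_toEuclideanLin_iff.mpr hH).re_inner_nonneg_left x

lemma re_inner_conjTranspose_mul_self (A : Matrix m m ℂ) (x : EuclideanSpace ℂ m) :
    re ⟪toEuclideanCLM (𝕜 := ℂ) (Aᴴ * A) x, x⟫_ℂ = ‖toEuclideanCLM (𝕜 := ℂ) A x‖ ^ 2 := by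
  rw [map_mul, ← star_eq_conjTranspose, map_star, apply_norm_sq_eq_inner_adjoint_left]
  rfl

lemma re_inner_conjTranspose_mul_self_add (A B : Matrix m m ℂ) (x : EuclideanSpace ℂ m) :
    re ⟪toEuclideanCLM (𝕜 := ℂ) (Aᴴ * A + Bᴴ * B) x, x⟫_ℂ =
      ‖toEuclideanCLM (𝕜 := ℂ) A x‖ ^ 2 + ‖toEuclideanCLM (𝕜 := ℂ) B x‖ ^ 2 := by
  rw [map_add, _root_.add_apply, inner_add_left, map_add, re_inner_conjTranspose_mul_self,
    re_inner_conjTranspose_mul_self]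

lemma singDesc_nonneg (M : Matrix m m ℂ) (j : ℕ) : 0 ≤ singDesc M j := Real.sqrt_nonneg _

lemma singDesc_sq (M : Matrix m m ℂ) (hj : 1 ≤ j) (hjm : j ≤ Fintype.card m) :
    singDesc M j ^ 2 = eigDesc (Mᴴ * M) j :=
  Real.sq_sqrt (eigDesc_nonneg (posSemidef_conjTranspose_mul_self M) hj hjm)

lemma exists_submodule_singDesc_mul_norm_le (M : Matrix m m ℂ) (hj : 1 ≤ j)
    (hjm : j ≤ Fintype.card m) :
    ∃ V : Submodule ℂ (EuclideanSpace ℂ m), finrank ℂ V = j ∧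
      ∀ x ∈ V, singDesc M j * ‖x‖ ≤ ‖toEuclideanCLM (𝕜 := ℂ) M x‖ := by
  have hM := isHermitian_conjTranspose_mul_self M
  obtain ⟨V, hV, hVM⟩ := (le_eigDesc_iff hM hj hjm).mp le_rfl
  refine ⟨V, hV, fun x hx ↦ le_of_sq_le_sq ?_ (norm_nonneg _)⟩
  rw [mul_pow, singDesc_sq M hj hjm, ← re_inner_conjTranspose_mul_self]
  exact hVM x hx

/-- The arithmetic–geometric mean inequality of Bhatia and Kittaneh. -/
theorem two_mul_singDesc_mul_conjTranspose_le (A B : Matrix m m ℂ) (hj : 1 ≤ j)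
    (hjm : j ≤ Fintype.card m) :
    2 * singDesc (A * Bᴴ) j ≤ eigDesc (Aᴴ * A + Bᴴ * B) j := by
  have hAB := (posSemidef_conjTranspose_mul_self A).add (posSemidef_conjTranspose_mul_self B)
  set s := singDesc (A * Bᴴ) j
  obtain hs | hs : 0 = s ∨ 0 < s := (singDesc_nonneg _ _).eq_or_lt
  · rw [← hs, mul_zero]
    exact eigDesc_nonneg hAB hj hjm
  obtain ⟨V, hV, hVs⟩ := exists_submodule_singDesc_mul_norm_le (A * Bᴴ) hj hjm
  set S := toEuclideanCLM (𝕜 := ℂ) A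
  set T := toEuclideanCLM (𝕜 := ℂ) B
  replace hVs (v) (hv : v ∈ V) : s * ‖v‖ ≤ ‖S (adjoint T v)‖ := by
    have := hVs v hv
    rwa [map_mul, ← star_eq_conjTranspose, map_star] at this
  let L : EuclideanSpace ℂ m →L[ℂ] EuclideanSpace ℂ m :=
    adjoint S ∘L S ∘L adjoint T + (s : ℂ) • adjoint T
  have hinj : Function.Injective (L.toLinearMap.domRestrict V) := by
    rw [injective_iff_map_eq_zero]
    rintro ⟨v, hv⟩ (hLv : L v = 0)
    exact Subtype.ext (eq_zero_of_adjoint_add_eq_zero S T hs v (hVs v hv) hLv)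
  refine (le_eigDesc_iff hAB.isHermitian hj hjm).mpr
    ⟨(L.toLinearMap.domRestrict V).range, by rw [LinearMap.finrank_range_of_inj hinj, hV], ?_⟩
  rintro _ ⟨⟨v, hv⟩, rfl⟩
  rw [re_inner_conjTranspose_mul_self_add]
  exact two_mul_norm_adjoint_add_sq_le S T hs.le v (hVs v hv) rfl

lemma eigDesc_add_sq_le {X Y : Matrix m m ℂ} (hX : X.IsHermitian) (hY : Y.IsHermitian)
    (hj : 1 ≤ j) (hjm : j ≤ Fintype.card m) (hXY : 0 ≤ eigDesc (X + Y) j) :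
    eigDesc (X + Y) j ^ 2 ≤ 2 * eigDesc (X ^ 2 + Y ^ 2) j := by
  set r := eigDesc (X + Y) j
  set S := toEuclideanCLM (𝕜 := ℂ) X
  set T := toEuclideanCLM (𝕜 := ℂ) Y
  obtain ⟨V, hV, hVr⟩ := (le_eigDesc_iff (hX.add hY) hj hjm).mp le_rfl
  suffices hhalf : r ^ 2 / 2 ≤ eigDesc (X ^ 2 + Y ^ 2) j by linarith
  refine (le_eigDesc_iff ((hX.pow 2).add (hY.pow 2)) hj hjm).mpr ⟨V, hV, fun x hx ↦ ?_⟩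
  have hform : re ⟪toEuclideanCLM (𝕜 := ℂ) (X ^ 2 + Y ^ 2) x, x⟫_ℂ = ‖S x‖ ^ 2 + ‖T x‖ ^ 2 := by
    rw [← re_inner_conjTranspose_mul_self_add, hX.eq, hY.eq, ← sq, ← sq]
  have hnorm : r * ‖x‖ ≤ ‖S x + T x‖ := by
    rcases eq_or_ne x 0 with rfl | hx0
    · simp
    · refine le_of_mul_le_mul_right ?_ (norm_pos_iff.mpr hx0)
      calc r * ‖x‖ * ‖x‖ = r * ‖x‖ ^ 2 := by ring
        _ ≤ re ⟪S x + T x, x⟫_ℂ := (hVr x hx).trans_eq (by rw [map_add, _root_.add_apply])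
        _ ≤ ‖S x + T x‖ * ‖x‖ := re_inner_le_norm _ _
  calc r ^ 2 / 2 * ‖x‖ ^ 2 = (r * ‖x‖) ^ 2 / 2 := by ring
    _ ≤ (‖S x‖ + ‖T x‖) ^ 2 / 2 := by gcongr; exact hnorm.trans (norm_add_le _ _)
    _ ≤ ‖S x‖ ^ 2 + ‖T x‖ ^ 2 := by linarith [add_sq_le (a := ‖S x‖) (b := ‖T x‖)]
    _ = _ := hform.symm

theorem two_mul_eigDesc_mul_sq_mul_le {P Q : Matrix m m ℂ} (hP : P.IsHermitian)
    (hQ : Q.IsHermitian) (hj : 1 ≤ j) (hjm : j ≤ Fintype.card m) :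
    2 * eigDesc (Q * P ^ 2 * Q) j ≤ eigDesc (P ^ 4 + Q ^ 4) j := by
  have hsing : singDesc (P * Q) j ^ 2 = eigDesc (Q * P ^ 2 * Q) j := by
    rw [singDesc_sq _ hj hjm, conjTranspose_mul, hP.eq, hQ.eq, sq]
    simp only [mul_assoc]
  have hmean : 2 * singDesc (P * Q) j ≤ eigDesc (P ^ 2 + Q ^ 2) j := by
    simpa only [hP.eq, hQ.eq, ← sq] using two_mul_singDesc_mul_conjTranspose_le P Q hj hjm
  have hnonneg := singDesc_nonneg (P * Q) j
  have hsq : eigDesc (P ^ 2 + Q ^ 2) j ^ 2 ≤ 2 * eigDesc (P ^ 4 + Q ^ 4) j := by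
    simpa only [← pow_mul] using eigDesc_add_sq_le (hP.pow 2) (hQ.pow 2) hj hjm (by linarith)
  calc 2 * eigDesc (Q * P ^ 2 * Q) j = (2 * singDesc (P * Q) j) ^ 2 / 2 := by rw [← hsing]; ring
    _ ≤ eigDesc (P ^ 2 + Q ^ 2) j ^ 2 / 2 := by gcongr
    _ ≤ eigDesc (P ^ 4 + Q ^ 4) j := by linarith

end MatrixEigenvalues

section MatrixPowers

variable {m : Type*} [Fintype m] [DecidableEq m] {A : Matrix m m ℂ}

lemma matPow_eq_conjStarAlgAut (hA : A.PosSemidef) (s : ℝ) :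
    matPow A s = Unitary.conjStarAlgAut ℂ _ hA.1.eigenvectorUnitary
      (diagonal fun i ↦ ((hA.1.eigenvalues i ^ s : ℝ) : ℂ)) := by
  rw [matPow, dif_pos hA, Unitary.conjStarAlgAut_apply, star_eq_conjTranspose]

lemma matPow_one (hA : A.PosSemidef) : matPow A 1 = A := by
  simp only [matPow_eq_conjStarAlgAut hA, Real.rpow_one]
  exact hA.1.spectral_theorem.symm

lemma matPow_pow (hA : A.PosSemidef) (s : ℝ) (k : ℕ) : matPow A s ^ k = matPow A (s * k) := by
  rw [matPow_eq_conjStarAlgAut hA, matPow_eq_conjStarAlgAut hA, ← map_pow, diagonal_pow]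
  congr 2
  ext i
  rw [Pi.pow_apply, Real.rpow_mul_natCast (hA.eigenvalues_nonneg i), Complex.ofReal_pow]

lemma isHermitian_matPow (A : Matrix m m ℂ) (s : ℝ) : (matPow A s).IsHermitian := by
  by_cases hA : A.PosSemidef
  · rw [matPow_eq_conjStarAlgAut hA]
    exact IsSelfAdjoint.map (isHermitian_diagonal_of_self_adjoint _
      (funext fun _ ↦ Complex.conj_ofReal _)).isSelfAdjoint _
  · rw [matPow, dif_neg hA]
    exact isHermitian_zero

end MatrixPowers

theorem stmt10_general {m : Type*} [Fintype m] [DecidableEq m] {A B : Matrix m m ℂ}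
    (hA : A.PosSemidef) (hB : B.PosSemidef) {j : ℕ} (hj : 1 ≤ j) (hjm : j ≤ Fintype.card m) :
    2 * eigDesc (matPow B (1/4) * matPow A (1/2) * matPow B (1/4)) j ≤ eigDesc (A + B) j := by
  have hsqrt : matPow A (1/4) ^ 2 = matPow A (1/2) := by rw [matPow_pow hA]; norm_num
  have hfourth {C : Matrix m m ℂ} (hC : C.PosSemidef) : matPow C (1/4) ^ 4 = C := by
    rw [matPow_pow hC]; norm_num [matPow_one hC]
  simpa only [hsqrt, hfourth hA, hfourth hB] using
    two_mul_eigDesc_mul_sq_mul_le (isHermitian_matPow A (1/4)) (isHermitian_matPow B (1/4)) hj hjm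

/-- For positive semidefinite `A, B`, `λ_j(A + B) ≥ 2 λ_j(B^{1/4} A^{1/2} B^{1/4})` for all `j`. -/
theorem stmt10 {n : ℕ} (A B : Matrix (Fin n) (Fin n) ℂ)
    (hA : A.PosSemidef) (hB : B.PosSemidef) :
    ∀ j : ℕ, 1 ≤ j → j ≤ n →
      2 * eigDesc (matPow B (1/4) * matPow A (1/2) * matPow B (1/4)) j ≤ eigDesc (A + B) j :=
  fun _ hj hjn ↦ stmt10_general hA hB hj (by rwa [Fintype.card_fin])
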